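/- arXiv:1010.5506 — 8 statements merged into one kernel-verified Lean document; each statement's English description precedes it below -/
import Mathlib

section
/- (MacWilliams identity for EAQEC codes, coefficient form.) Let n ≥ 1 and let W be an F₂-linear subspace of V_n. For 0 ≤ w ≤ n let A_w be the number of elements of W of Pauli weight w and B_w the number of elements of W^⊥ of Pauli weight w. Then for every w with 0 ≤ w ≤ n, |W| · B_w = Σ_{w'=0}^{n} P_w(w',n) · A_{w'}, where P_w(w',n) = Σ_{u=0}^{w} (−1)^u 3^{w−u} C(w',u) C(n−w', w−u) is the Krawtchouk polynomial. -/
open Finset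

/-- The binary symplectic space modelling `n`-qubit Pauli operators modulo phases. -/
abbrev V (n : ℕ) := (Fin n → ZMod 2) × (Fin n → ZMod 2)

/-- The Pauli weight of `v = (x, z)`: the number of indices where `(x i, z i) ≠ (0,0)`. -/
def wt {n : ℕ} (v : V n) : ℕ :=
  (Finset.univ.filter fun i => ¬(v.1 i = 0 ∧ v.2 i = 0)).card

/-- The binary symplectic product. -/
def sympl {n : ℕ} (u v : V n) : ZMod 2 :=
  ∑ i, (u.1 i * v.2 i + u.2 i * v.1 i)

lemma sympl_add_left {n : ℕ} (a b w : V n) :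
    sympl (a + b) w = sympl a w + sympl b w := by
  simp only [sympl, Prod.fst_add, Prod.snd_add, Pi.add_apply, ← Finset.sum_add_distrib]
  exact Finset.sum_congr rfl fun i _ => by ring

lemma sympl_smul_left {n : ℕ} (c : ZMod 2) (a w : V n) :
    sympl (c • a) w = c * sympl a w := by
  simp only [sympl, Prod.smul_fst, Prod.smul_snd, Pi.smul_apply, smul_eq_mul,
    Finset.mul_sum]
  exact Finset.sum_congr rfl fun i _ => by ring

/-- The symplectic dual `W^⊥` of a subspace `W ⊆ V n`. -/
def sdual {n : ℕ} (W : Submodule (ZMod 2) (V n)) : Submodule (ZMod 2) (V n) where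
  carrier := {u | ∀ w ∈ W, sympl u w = 0}
  add_mem' := fun ha hb w hw => by
    rw [sympl_add_left, ha w hw, hb w hw, add_zero]
  zero_mem' := fun w hw => by simp [sympl]
  smul_mem' := fun c a ha w hw => by rw [sympl_smul_left, ha w hw, mul_zero]

open scoped Classical

/-- The Krawtchouk polynomial `P_w(w', n)`. -/
def kraw (n w w' : ℕ) : ℤ :=
  ∑ u ∈ Finset.range (w + 1),
    (-1 : ℤ) ^ u * 3 ^ (w - u) * (w'.choose u) * ((n - w').choose (w - u))

/-- The nontrivial sign character of `ZMod 2`. -/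
def sgn2 (a : ZMod 2) : ℤ := if a = 0 then 1 else -1

lemma sgn2_add (a b : ZMod 2) : sgn2 (a + b) = sgn2 a * sgn2 b := by
  revert a b; unfold sgn2; decide

lemma sgn2_sum {ι : Type*} (s : Finset ι) (f : ι → ZMod 2) :
    sgn2 (∑ i ∈ s, f i) = ∏ i ∈ s, sgn2 (f i) := by
  induction s using Finset.induction_on with
  | empty => simp [sgn2]
  | insert a s ha ih => rw [Finset.sum_insert ha, Finset.prod_insert ha, sgn2_add, ih]

lemma sympl_add_right' {n : ℕ} (a b w : V n) :
    sympl w (a + b) = sympl w a + sympl w b := by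
  simp only [sympl, Prod.fst_add, Prod.snd_add, Pi.add_apply, ← Finset.sum_add_distrib]
  exact Finset.sum_congr rfl fun i _ => by ring

lemma sum_sgn2 {n : ℕ} (W : Submodule (ZMod 2) (V n)) (v : V n) :
    ∑ m ∈ Finset.univ.filter (fun m => m ∈ W), sgn2 (sympl v m) =
      if v ∈ sdual W then ((Finset.univ.filter (fun m => m ∈ W)).card : ℤ) else 0 := by
  split_ifs with h
  · have : ∀ m ∈ Finset.univ.filter (fun m => m ∈ W), sgn2 (sympl v m) = 1 := by
      intro m hm
      rw [h m (by simpa using hm)]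
      simp [sgn2]
    rw [Finset.sum_congr rfl this]
    simp
  · have : ∃ m₀ ∈ W, sympl v m₀ ≠ 0 := by
      by_contra! hc
      exact h hc
    obtain ⟨m₀, hm₀, hne⟩ := this
    have hs : sgn2 (sympl v m₀) = -1 := by simp [sgn2, hne]
    have key : ∑ m ∈ Finset.univ.filter (fun m => m ∈ W), sgn2 (sympl v m) =
        ∑ m ∈ Finset.univ.filter (fun m => m ∈ W), sgn2 (sympl v (m + m₀)) := by
      refine (Finset.sum_bij (fun m _ => m + m₀) ?_ ?_ ?_ ?_).symm
      · intro a ha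
        simp only [Finset.mem_filter, Finset.mem_univ, true_and] at ha ⊢
        exact W.add_mem ha hm₀
      · intro a _ b _ hab
        exact add_right_cancel hab
      · intro b hb
        simp only [Finset.mem_filter, Finset.mem_univ, true_and] at hb
        exact ⟨b - m₀, by simpa using W.sub_mem hb hm₀, by simp⟩
      · intro a _
        rfl
    simp only [sympl_add_right', sgn2_add, hs, mul_neg, mul_one, Finset.sum_neg_distrib] at key
    linarith

open Polynomial in
lemma coeff_lin_pow (a : ℤ) (k j : ℕ) :
    ((1 + C a * X : ℤ[X]) ^ k).coeff j = a ^ j * (k.choose j : ℤ) := by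
  have h : (1 + C a * X : ℤ[X]) ^ k = ((1 + X : ℤ[X]) ^ k).comp (C a * X) := by simp
  rw [h, comp_C_mul_X_coeff, coeff_one_add_X_pow, mul_comm]

open Polynomial in
lemma coeff_kraw (n w k : ℕ) :
    ((1 + C (-1) * X : ℤ[X]) ^ k * (1 + C 3 * X : ℤ[X]) ^ (n - k)).coeff w = kraw n w k := by
  rw [coeff_mul, Finset.Nat.sum_antidiagonal_eq_sum_range_succ_mk, kraw]
  refine Finset.sum_congr rfl fun u _ => ?_
  simp only [coeff_lin_pow]
  ring

open Polynomial in
lemma local_sum (c d : ZMod 2) :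
    ∑ p : ZMod 2 × ZMod 2, (C (sgn2 (p.1 * d + p.2 * c)) *
        X ^ (if ¬(p.1 = 0 ∧ p.2 = 0) then 1 else 0) : ℤ[X]) =
      if ¬(c = 0 ∧ d = 0) then 1 + C (-1) * X else 1 + C 3 * X := by
  have h01 : ∀ f : ZMod 2 → ℤ[X], ∑ x, f x = f 0 + f 1 := fun f => Fin.sum_univ_two f
  have hz : ∀ x : ZMod 2, x = 0 ∨ x = 1 := by decide
  have h2 : (1 + 1 : ZMod 2) = 0 := by decide
  have h3 : (C 3 : ℤ[X]) = 3 := rfl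
  rw [Fintype.sum_prod_type]
  simp only [h01]
  rcases hz c with rfl | rfl <;> rcases hz d with rfl | rfl <;>
    simp [sgn2, h2, h3] <;> ring

open Polynomial in
lemma gen_sum {n : ℕ} (m : V n) :
    ∑ v : V n, (C (sgn2 (sympl v m)) * X ^ wt v : ℤ[X]) =
      (1 + C (-1) * X) ^ wt m * (1 + C 3 * X) ^ (n - wt m) := by
  have h1 : ∀ v : V n, (C (sgn2 (sympl v m)) * X ^ wt v : ℤ[X]) =
      ∏ i, (C (sgn2 (v.1 i * m.2 i + v.2 i * m.1 i)) *
        X ^ (if ¬(v.1 i = 0 ∧ v.2 i = 0) then 1 else 0) : ℤ[X]) := by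
    intro v
    rw [Finset.prod_mul_distrib, sympl, sgn2_sum, map_prod, Finset.prod_pow_eq_pow_sum, wt,
      Finset.card_filter]
  simp only [h1]
  rw [← (Equiv.arrowProdEquivProdArrow (Fin n) (fun _ => ZMod 2) (fun _ => ZMod 2)).sum_comp]
  have h2 := Finset.prod_univ_sum (fun _ : Fin n => (Finset.univ : Finset (ZMod 2 × ZMod 2)))
    (fun i p => (C (sgn2 (p.1 * m.2 i + p.2 * m.1 i)) *
        X ^ (if ¬(p.1 = 0 ∧ p.2 = 0) then 1 else 0) : ℤ[X]))
  rw [Fintype.piFinset_univ] at h2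
  refine h2.symm.trans ?_
  simp only [local_sum]
  rw [Finset.prod_ite, Finset.prod_const, Finset.prod_const]
  have h3 := Finset.card_filter_add_card_filter_not (s := (Finset.univ : Finset (Fin n)))
    (fun i => ¬(m.1 i = 0 ∧ m.2 i = 0))
  rw [Finset.card_univ, Fintype.card_fin] at h3
  congr 2
  unfold wt
  omega

lemma sum_kraw {n : ℕ} (m : V n) (w : ℕ) :
    ∑ v ∈ Finset.univ.filter (fun v : V n => wt v = w), sgn2 (sympl v m) = kraw n w (wt m) := by
  rw [← coeff_kraw, ← gen_sum, Polynomial.finsetSum_coeff, Finset.sum_filter]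
  refine Finset.sum_congr rfl fun v _ => ?_
  rw [Polynomial.coeff_C_mul, Polynomial.coeff_X_pow]
  by_cases h : wt v = w
  · simp [h]
  · simp [h, Ne.symm h]

lemma wt_le' {n : ℕ} (v : V n) : wt v ≤ n := by
  have := Finset.card_filter_le (Finset.univ : Finset (Fin n)) (fun i => ¬(v.1 i = 0 ∧ v.2 i = 0))
  simpa [wt] using this

/-- MacWilliams identity for EAQEC codes (coefficient form):
`|W| ⬝ B_w = ∑_{w'=0}^{n} P_w(w',n) ⬝ A_{w'}`. -/
theorem macwilliams_coeff (n : ℕ) (hn : 1 ≤ n) (W : Submodule (ZMod 2) (V n))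
    (w : ℕ) (hw : w ≤ n) :
    ((Finset.univ.filter (fun m => m ∈ W)).card : ℤ) *
        ((Finset.univ.filter (fun v => v ∈ sdual W ∧ wt v = w)).card : ℤ) =
      ∑ w' ∈ Finset.range (n + 1),
        kraw n w w' *
          ((Finset.univ.filter (fun v => v ∈ W ∧ wt v = w')).card : ℤ) := by
  have hL : ((Finset.univ.filter (fun m => m ∈ W)).card : ℤ) *
        ((Finset.univ.filter (fun v => v ∈ sdual W ∧ wt v = w)).card : ℤ) =
      ∑ v ∈ Finset.univ.filter (fun v : V n => wt v = w),
        ∑ m ∈ Finset.univ.filter (fun m => m ∈ W), sgn2 (sympl v m) := by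
    simp only [sum_sgn2]
    rw [← Finset.sum_filter, Finset.sum_const, Finset.filter_filter, nsmul_eq_mul, mul_comm]
    simp only [and_comm]
  have hR : ∑ w' ∈ Finset.range (n + 1), kraw n w w' *
          ((Finset.univ.filter (fun v => v ∈ W ∧ wt v = w')).card : ℤ) =
      ∑ m ∈ Finset.univ.filter (fun m => m ∈ W), kraw n w (wt m) := by
    rw [← Finset.sum_fiberwise_of_maps_to (t := Finset.range (n + 1)) (g := wt)
      (fun m _ => Finset.mem_range.2 (Nat.lt_succ_of_le (wt_le' m)))]
    refine Finset.sum_congr rfl fun w' _ => ?_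
    rw [Finset.filter_filter, Finset.sum_congr rfl (g := fun _ => kraw n w w'),
      Finset.sum_const, nsmul_eq_mul, mul_comm]
    intro m hm
    rw [(Finset.mem_filter.1 hm).2.2]
  rw [hL, hR, Finset.sum_comm]
  exact Finset.sum_congr rfl fun m _ => sum_kraw m w
end

section
/- (Entanglement-assisted repetition codes, odd length.) For every odd integer n ≥ 1, there exists an F₂-subspace S ⊆ V_n with dim S = 2(n−1) and S ∩ S^⊥ = {0} such that the minimum Pauli weight of a nonzero element of S^⊥ equals n; that is, a maximal-entanglement [[n,1,n;n−1]] EAQEC code exists. (Explicitly, S^⊥ is spanned by the all-X vector (1,…,1 | 0,…,0) and the all-Z vector (0,…,0 | 1,…,1).) -/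
open Finset

open scoped Classical

/-- The pair of coordinate sums `(∑ x i, ∑ z i)`. -/
def sumMap (n : ℕ) : V n →ₗ[ZMod 2] (ZMod 2 × ZMod 2) where
  toFun v := (∑ i, v.1 i, ∑ i, v.2 i)
  map_add' a b := by simp [Finset.sum_add_distrib]
  map_smul' c a := by simp [Finset.mul_sum]

lemma finrank_ker_sumMap (n : ℕ) (hn : 1 ≤ n) :
    Module.finrank (ZMod 2) (LinearMap.ker (sumMap n)) = 2 * (n - 1) := by
  have hs : Function.Surjective (sumMap n) := by
    rintro ⟨a, b⟩
    refine ⟨(Pi.single ⟨0, hn⟩ a, Pi.single ⟨0, hn⟩ b), ?_⟩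
    simp [sumMap]
  have h := LinearMap.finrank_range_add_finrank_ker (sumMap n)
  rw [LinearMap.range_eq_top.2 hs] at h
  simp at h
  omega

lemma mem_sdual_ker (n : ℕ) (hn : 1 ≤ n) (u : V n) :
    u ∈ sdual (LinearMap.ker (sumMap n)) ↔
      ∃ a b : ZMod 2, u = ((fun _ => a), (fun _ => b)) := by
  constructor
  · intro h
    refine ⟨u.1 ⟨0, hn⟩, u.2 ⟨0, hn⟩, ?_⟩
    have h1 : ∀ i, u.1 i = u.1 ⟨0, hn⟩ := fun i => by
      have := h (0, Pi.single i 1 - Pi.single ⟨0, hn⟩ 1) (by simp [sumMap])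
      simp [sympl, mul_sub, Finset.sum_sub_distrib, Pi.single_apply] at this
      exact sub_eq_zero.1 this
    have h2 : ∀ i, u.2 i = u.2 ⟨0, hn⟩ := fun i => by
      have := h (Pi.single i 1 - Pi.single ⟨0, hn⟩ 1, 0) (by simp [sumMap])
      simp [sympl, mul_sub, Finset.sum_sub_distrib, Pi.single_apply] at this
      exact sub_eq_zero.1 this
    exact Prod.ext (funext h1) (funext h2)
  · rintro ⟨a, b, rfl⟩ w hw
    have hw' : (∑ i, w.1 i, ∑ i, w.2 i) = ((0, 0) : ZMod 2 × ZMod 2) := hw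
    rw [Prod.mk.injEq] at hw'
    simp [sympl, Finset.sum_add_distrib, ← Finset.mul_sum, hw'.1, hw'.2]

lemma wt_const (n : ℕ) (a b : ZMod 2) (h : ¬(a = 0 ∧ b = 0)) :
    wt (((fun _ => a), (fun _ => b)) : V n) = n := by
  unfold wt
  rw [Finset.filter_true_of_mem (fun _ _ => h)]
  simp

/-- For every odd `n ≥ 1` a maximal-entanglement `[[n,1,n;n−1]]` EAQEC
code exists; explicitly, its logical group `S^⊥` is spanned by the all-`X` vector
and the all-`Z` vector. -/
theorem EA_repetition_code_odd (n : ℕ) (hn : 1 ≤ n) (hodd : Odd n) :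
    ∃ S : Submodule (ZMod 2) (V n),
      Module.finrank (ZMod 2) S = 2 * (n - 1) ∧
      S ⊓ sdual S = ⊥ ∧
      sdual S = Submodule.span (ZMod 2)
        {(((fun _ => 1), (fun _ => 0)) : V n), (((fun _ => 0), (fun _ => 1)) : V n)} ∧
      (∀ v ∈ sdual S, v ≠ 0 → n ≤ wt v) ∧
      (∃ v ∈ sdual S, v ≠ 0 ∧ wt v = n) := by
  have hn1 : (n : ZMod 2) = 1 := ZMod.natCast_eq_one_iff_odd.2 hodd
  refine ⟨LinearMap.ker (sumMap n), finrank_ker_sumMap n hn, ?_, ?_, ?_, ?_⟩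
  · rw [eq_bot_iff]
    rintro u ⟨hu, hu'⟩
    obtain ⟨a, b, rfl⟩ := (mem_sdual_ker n hn u).1 hu'
    simp [sumMap, hn1] at hu
    obtain ⟨rfl, rfl⟩ := hu
    rfl
  · ext u
    rw [mem_sdual_ker n hn, Submodule.mem_span_pair]
    refine exists_congr fun a => exists_congr fun b => ?_
    rw [eq_comm]
    refine Eq.congr_left ?_
    ext <;> simp
  · intro v hv h0
    obtain ⟨a, b, rfl⟩ := (mem_sdual_ker n hn v).1 hv
    refine (wt_const n a b ?_).ge
    rintro ⟨rfl, rfl⟩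
    exact h0 rfl
  · refine ⟨((fun _ => 1), (fun _ => 0)), (mem_sdual_ker n hn _).2 ⟨1, 0, rfl⟩, ?_,
      wt_const n 1 0 (by simp)⟩
    intro h
    have := congrFun (congrArg Prod.fst h) ⟨0, hn⟩
    simp at this
end

section
/- (Entanglement-assisted repetition codes, even length.) For every even integer n ≥ 2, there exists an F₂-subspace S ⊆ V_n with dim S = 2(n−1) and S ∩ S^⊥ = {0} such that the minimum Pauli weight of a nonzero element of S^⊥ equals n−1; that is, a maximal-entanglement [[n,1,n−1;n−1]] EAQEC code exists. -/
open Finset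

open scoped Classical

lemma sympl_comm {n : ℕ} (u v : V n) : sympl u v = sympl v u :=
  Finset.sum_congr rfl fun i _ => by ring

lemma sympl_self {n : ℕ} (u : V n) : sympl u u = 0 :=
  Finset.sum_eq_zero fun i _ => by
    rw [mul_comm (u.2 i)]; exact CharTwo.add_self_eq_zero _

/-- `sympl` as a linear functional in its first argument. -/
def symplL {n : ℕ} (w : V n) : V n →ₗ[ZMod 2] ZMod 2 where
  toFun u := sympl u w
  map_add' a b := sympl_add_left a b w
  map_smul' c a := sympl_smul_left c a w

lemma sympl_nondeg {n : ℕ} (v : V n) (h : ∀ u, sympl v u = 0) : v = 0 := by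
  ext i
  · simpa [sympl, Pi.single_apply] using h (0, Pi.single i 1)
  · simpa [sympl, Pi.single_apply] using h (Pi.single i 1, 0)

/-- The subspace of vectors orthogonal to `a` and `b`. -/
def codeS {n : ℕ} (a b : V n) : Submodule (ZMod 2) (V n) :=
  LinearMap.ker ((symplL a).prod (symplL b))

lemma mem_codeS {n : ℕ} (a b u : V n) :
    u ∈ codeS a b ↔ sympl u a = 0 ∧ sympl u b = 0 := by
  simp [codeS, LinearMap.mem_ker, symplL, Prod.ext_iff]

lemma finrank_codeS {n : ℕ} (a b : V n) (hab : sympl a b = 1) :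
    Module.finrank (ZMod 2) (codeS a b) = 2 * (n - 1) := by
  have hs : LinearMap.range ((symplL a).prod (symplL b)) = ⊤ := by
    rw [LinearMap.range_eq_top]
    rintro ⟨p, q⟩
    refine ⟨q • a + p • b, ?_⟩
    ext <;> simp [symplL, sympl_add_left, sympl_smul_left, sympl_self, hab, sympl_comm b a]
  have h := LinearMap.finrank_range_add_finrank_ker ((symplL a).prod (symplL b))
  rw [hs, finrank_top] at h
  simp only [Module.finrank_prod, Module.finrank_self, Module.finrank_fin_fun] at h
  unfold codeS
  omega

lemma mem_sdual_codeS {n : ℕ} (a b : V n) (hab : sympl a b = 1) (v : V n)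
    (hv : v ∈ sdual (codeS a b)) : v = sympl v b • a + sympl v a • b := by
  rw [← sub_eq_zero]
  apply sympl_nondeg
  intro u
  have h := hv (u - (sympl u b • a + sympl u a • b)) (by
    rw [mem_codeS]
    constructor <;>
    · rw [sub_eq_add_neg, ← neg_one_smul (ZMod 2)]
      simp only [sympl_add_left, sympl_smul_left, sympl_self, hab, sympl_comm b a]
      ring)
  rw [sympl_comm] at h
  rw [sub_eq_add_neg, ← neg_one_smul (ZMod 2)] at h ⊢
  simp only [sympl_add_left, sympl_smul_left] at h ⊢
  rw [sympl_comm u v, sympl_comm a v, sympl_comm b v] at h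
  rw [sympl_comm a u, sympl_comm b u]
  linear_combination h

lemma card_ne_zero_fin (m : ℕ) :
    (Finset.univ.filter fun i : Fin (m + 1) => ¬ i = 0).card = m := by
  rw [Finset.filter_not, Finset.filter_eq' ]
  simp [Finset.card_sdiff]

/-- For every even `n ≥ 2` a maximal-entanglement `[[n,1,n−1;n−1]]`
entanglement-assisted repetition code exists. -/
theorem EA_repetition_code_even (n : ℕ) (hn : 2 ≤ n) (heven : Even n) :
    ∃ S : Submodule (ZMod 2) (V n),
      Module.finrank (ZMod 2) S = 2 * (n - 1) ∧
      S ⊓ sdual S = ⊥ ∧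
      (∀ v ∈ sdual S, v ≠ 0 → n - 1 ≤ wt v) ∧
      (∃ v ∈ sdual S, v ≠ 0 ∧ wt v = n - 1) := by
  obtain ⟨m, rfl⟩ : ∃ m, n = m + 1 := ⟨n - 1, by omega⟩
  have hm : Odd m := by
    rcases Nat.even_or_odd m with h | h
    · exact absurd heven (by simpa [Nat.even_add_one] using h)
    · exact h
  obtain ⟨a, ha⟩ : ∃ a : V (m + 1), a = (fun _ => 1, fun _ => 0) := ⟨_, rfl⟩
  obtain ⟨b, hb⟩ : ∃ b : V (m + 1), b = (fun _ => 0, fun i => if i = 0 then 0 else 1) :=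
    ⟨_, rfl⟩
  have hab : sympl a b = 1 := by
    subst ha hb
    simp only [sympl, Fin.sum_univ_succ]
    simpa [Fin.succ_ne_zero] using (ZMod.natCast_eq_one_iff_odd).2 hm
  have wb : wt b = m := by
    subst hb
    simpa [wt] using card_ne_zero_fin m
  have wtop : ∀ v : V (m + 1), (∀ i, v.1 i = 1) → wt v = m + 1 := by
    intro v hv
    simp [wt, hv]
  refine ⟨codeS a b, finrank_codeS a b hab, ?_, ?_, b, ?_, ?_, by simpa using wb⟩
  · rw [eq_bot_iff]
    rintro v ⟨h1, h2⟩
    have h3 := (mem_codeS a b v).1 h1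
    have h4 := mem_sdual_codeS a b hab v h2
    rw [h3.1, h3.2] at h4
    simpa using h4
  · intro v hv hv0
    have h4 := mem_sdual_codeS a b hab v hv
    have h01 : ∀ c : ZMod 2, c = 0 ∨ c = 1 := by decide
    rcases h01 (sympl v b) with h | h
    · rcases h01 (sympl v a) with h' | h'
      · rw [h, h'] at h4
        exact absurd (by simpa using h4) hv0
      · rw [h, h'] at h4
        have : v = b := by simpa using h4
        rw [this, wb]; simp
    · have := wtop v (fun i => by rw [h4, h, ha, hb]; simp)
      omega
  · intro w hw
    rw [sympl_comm]
    exact ((mem_codeS a b w).1 hw).2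
  · rintro rfl
    simp [sympl] at hab
end

section
/- (Nonexistence of [[n,1,n;n−1]] EAQEC codes for even n.) Let n ≥ 2 be an even integer. Then there do not exist u, v ∈ V_n with λ(u,v) = 1 such that wt(u) = wt(v) = wt(u+v) = n. Consequently, no maximal-entanglement [[n,1,n;n−1]] EAQEC code exists for even n. -/
open Finset

/-- Two distinct nonzero single-qubit Paulis anticommute. -/
lemma key_anticomm : ∀ a b c d : ZMod 2, ¬(a = 0 ∧ b = 0) → ¬(c = 0 ∧ d = 0) →
    ¬(a + c = 0 ∧ b + d = 0) → a * d + b * c = 1 := by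
  decide

open scoped Classical

/-- For even `n` there are no `u, v ∈ V n` with `λ(u,v) = 1` and
`wt u = wt v = wt (u+v) = n`; hence no maximal-entanglement `[[n,1,n;n−1]]` EAQEC
code exists for even `n`. -/
theorem no_even_length_EA_repetition (n : ℕ) (hn : 2 ≤ n) (heven : Even n) :
    ¬ ∃ u v : V n, sympl u v = 1 ∧ wt u = n ∧ wt v = n ∧ wt (u + v) = n := by
  rintro ⟨u, v, hs, hu, hv, huv⟩
  have full : ∀ w : V n, wt w = n → ∀ i, ¬(w.1 i = 0 ∧ w.2 i = 0) := by
    intro w hw i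
    unfold wt at hw
    have h := (Finset.card_eq_iff_eq_univ _).1 (hw.trans (Fintype.card_fin n).symm)
    have hi := Finset.mem_univ i
    rw [← h] at hi
    exact (Finset.mem_filter.1 hi).2
  have hsum : sympl u v = (n : ZMod 2) := by
    unfold sympl
    rw [Finset.sum_congr rfl fun i _ => key_anticomm _ _ _ _ (full u hu i) (full v hv i)
      (full (u + v) huv i)]
    simp
  have h0 : (n : ZMod 2) = 0 := (ZMod.natCast_eq_zero_iff_even).2 heven
  rw [hsum, h0] at hs
  exact zero_ne_one hs
end

section
/- (Nonexistence of [[n,n−1,2;1]] EAQEC codes for even n.) Let n ≥ 2 be an even integer. Then there do not exist u, v ∈ V_n with λ(u,v) = 1 such that every nonzero element of (span{u,v})^⊥ has Pauli weight at least 2. Consequently, no maximal-entanglement [[n,n−1,2;1]] EAQEC code exists for even n. -/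
open Finset

open scoped Classical

/-- A singular `2 × 2` system over `ZMod 2` has a nonzero solution. -/
lemma local_kernel : ∀ a b c d : ZMod 2, a * d + b * c ≠ 1 →
    ∃ p q : ZMod 2, ¬(p = 0 ∧ q = 0) ∧ p * b + q * a = 0 ∧ p * d + q * c = 0 := by
  decide

lemma sympl_single {n : ℕ} (i : Fin n) (p q : ZMod 2) (w : V n) :
    sympl ((Pi.single i p, Pi.single i q) : V n) w = p * w.2 i + q * w.1 i := by
  unfold sympl
  rw [Finset.sum_eq_single i]
  · simp
  · intro j _ hj
    simp [Pi.single_eq_of_ne hj]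
  · simp

lemma sympl_smul_right' {n : ℕ} (c : ZMod 2) (a w : V n) :
    sympl w (c • a) = c * sympl w a := by
  simp only [sympl, Prod.smul_fst, Prod.smul_snd, Pi.smul_apply, smul_eq_mul,
    Finset.mul_sum]
  exact Finset.sum_congr rfl fun i _ => by ring

/-- For even `n` there are no `u, v ∈ V n` with `λ(u,v) = 1` such that
every nonzero element of `(span {u,v})^⊥` has Pauli weight at least `2`; hence no
maximal-entanglement `[[n,n−1,2;1]]` EAQEC code exists for even `n`. -/
theorem no_even_length_EA_accumulator (n : ℕ) (hn : 2 ≤ n) (heven : Even n) :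
    ¬ ∃ u v : V n, sympl u v = 1 ∧
      ∀ w ∈ sdual (Submodule.span (ZMod 2) {u, v}), w ≠ 0 → 2 ≤ wt w := by
  rintro ⟨u, v, huv, h⟩
  have key : ∀ i, u.1 i * v.2 i + u.2 i * v.1 i = 1 := by
    intro i
    by_contra hi
    obtain ⟨p, q, hpq, h1, h2⟩ := local_kernel _ _ _ _ hi
    have hmem : ((Pi.single i p, Pi.single i q) : V n) ∈
        sdual (Submodule.span (ZMod 2) {u, v}) := by
      intro w hw
      obtain ⟨a, b, rfl⟩ := Submodule.mem_span_pair.1 hw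
      rw [sympl_add_right', sympl_smul_right', sympl_smul_right', sympl_single,
        sympl_single, h1, h2]
      simp
    have h3 := h _ hmem (by
      intro h0
      apply hpq
      have e1 := congrFun (congrArg Prod.fst h0) i
      have e2 := congrFun (congrArg Prod.snd h0) i
      simpa using And.intro e1 e2)
    have h4 : wt ((Pi.single i p, Pi.single i q) : V n) ≤ 1 := by
      unfold wt
      rw [← Finset.card_singleton i]
      apply Finset.card_le_card
      intro j hj
      rw [Finset.mem_singleton]
      by_contra hji
      simp [Pi.single_eq_of_ne hji] at hj
    omega
  unfold sympl at huv
  rw [Finset.sum_congr rfl fun i _ => key i] at huv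
  obtain ⟨k, rfl⟩ := heven
  simp [CharTwo.add_self_eq_zero] at huv
end

section
/- (Lengthening an EAQEC code.) Let n, k, c, d be integers with n ≥ 1, and suppose S ⊆ V_n is an F₂-subspace with dim S = n−k+c, dim(S ∩ S^⊥) = n−k−c, and every element of S^⊥ \ (S ∩ S^⊥) has Pauli weight at least d. Then there exists an F₂-subspace S' ⊆ V_{n+1} with dim S' = (n+1)−k+(c+1), dim(S' ∩ S'^⊥) = (n+1)−k−(c+1), and every element of S'^⊥ \ (S' ∩ S'^⊥) has Pauli weight at least d. That is, the existence of an [[n,k,d;c]] EAQEC code implies the existence of an [[n+1,k,d;c+1]] EAQEC code. -/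
open Finset

open scoped Classical

/-- Drop the first qubit. -/
def dropMap (n : ℕ) : V (n + 1) →ₗ[ZMod 2] V n where
  toFun v := (fun i => v.1 i.succ, fun i => v.2 i.succ)
  map_add' _ _ := rfl
  map_smul' _ _ := rfl

/-- Prepend a qubit on which the operator acts trivially. -/
def padMap (n : ℕ) : V n →ₗ[ZMod 2] V (n + 1) where
  toFun v := (Fin.cons 0 v.1, Fin.cons 0 v.2)
  map_add' u v := by
    ext i <;> refine Fin.cases ?_ (fun j => ?_) i <;> simp
  map_smul' a v := by
    ext i <;> refine Fin.cases ?_ (fun j => ?_) i <;> simp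

lemma dropMap_apply {n : ℕ} (v : V (n + 1)) :
    dropMap n v = (fun i => v.1 i.succ, fun i => v.2 i.succ) := rfl

lemma dropMap_cons {n : ℕ} (a b : ZMod 2) (v : V n) :
    dropMap n (Fin.cons a v.1, Fin.cons b v.2) = v := by
  simp [dropMap_apply]

lemma padMap_injective (n : ℕ) : Function.Injective (padMap n) := by
  intro u v h
  have := congrArg (dropMap n) h
  simpa [padMap, dropMap_cons] using this

/-- The lengthened space is `S` plus the full space of one qubit. -/
def comapDropEquiv {n : ℕ} (S : Submodule (ZMod 2) (V n)) :
    (S.comap (dropMap n)) ≃ₗ[ZMod 2] S × (ZMod 2 × ZMod 2) where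
  toFun v := (⟨dropMap n v.1, v.2⟩, (v.1.1 0, v.1.2 0))
  map_add' _ _ := rfl
  map_smul' _ _ := rfl
  invFun w := ⟨(Fin.cons w.2.1 w.1.1.1, Fin.cons w.2.2 w.1.1.2), by
    rw [Submodule.mem_comap, dropMap_cons]; exact w.1.2⟩
  left_inv v := by
    apply Subtype.ext
    ext i <;> refine Fin.cases ?_ (fun j => ?_) i <;> simp [dropMap_apply]
  right_inv w := by
    simp [dropMap_cons]

lemma sympl_succ {n : ℕ} (u v : V (n + 1)) :
    sympl u v = (u.1 0 * v.2 0 + u.2 0 * v.1 0) + sympl (dropMap n u) (dropMap n v) := by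
  simp [sympl, dropMap_apply, Fin.sum_univ_succ]

lemma mem_sdual {n : ℕ} {S : Submodule (ZMod 2) (V n)} {u : V n} :
    u ∈ sdual S ↔ ∀ w ∈ S, sympl u w = 0 := Iff.rfl

lemma sdual_comap {n : ℕ} (S : Submodule (ZMod 2) (V n)) :
    sdual (S.comap (dropMap n)) = (sdual S).map (padMap n) := by
  ext u
  rw [Submodule.mem_map, mem_sdual]
  constructor
  · intro h
    have h1 := h (Fin.cons 0 (0 : V n).1, Fin.cons 1 (0 : V n).2) (by
      rw [Submodule.mem_comap, dropMap_cons 0 1 (0 : V n)]; exact S.zero_mem)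
    have h2 := h (Fin.cons 1 (0 : V n).1, Fin.cons 0 (0 : V n).2) (by
      rw [Submodule.mem_comap, dropMap_cons 1 0 (0 : V n)]; exact S.zero_mem)
    rw [sympl_succ, dropMap_cons _ _ (0 : V n)] at h1 h2
    have h1' : u.1 0 = 0 := by simpa [sympl] using h1
    have h2' : u.2 0 = 0 := by simpa [sympl] using h2
    refine ⟨dropMap n u, ?_, ?_⟩
    · intro w hw
      have h3 := h (Fin.cons 0 w.1, Fin.cons 0 w.2) (by
        rw [Submodule.mem_comap, dropMap_cons]; exact hw)
      rw [sympl_succ, dropMap_cons] at h3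
      simpa using h3
    · ext i <;> refine Fin.cases ?_ (fun j => ?_) i <;> simp [padMap, dropMap_apply, h1', h2']
  · rintro ⟨v, hv, rfl⟩ w hw
    rw [sympl_succ]
    have := hv _ hw
    have e : dropMap n (padMap n v) = v := dropMap_cons 0 0 v
    rw [e, this]
    simp [padMap]

lemma rad_comap {n : ℕ} (S : Submodule (ZMod 2) (V n)) :
    S.comap (dropMap n) ⊓ sdual (S.comap (dropMap n)) = (S ⊓ sdual S).map (padMap n) := by
  rw [sdual_comap]
  ext u
  have e : ∀ v, dropMap n (padMap n v) = v := fun v => dropMap_cons 0 0 v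
  constructor
  · rintro ⟨h1, v, hv, rfl⟩
    refine ⟨v, ⟨?_, hv⟩, rfl⟩
    have h1' : dropMap n (padMap n v) ∈ S := h1
    rwa [e] at h1'
  · rintro ⟨v, ⟨hv, hv'⟩, rfl⟩
    refine ⟨?_, v, hv', rfl⟩
    change dropMap n (padMap n v) ∈ S
    rwa [e]

lemma wt_padMap {n : ℕ} (v : V n) : wt (padMap n v) = wt v := by
  simp [wt, padMap, Fin.univ_succ, Finset.filter_insert, Finset.filter_map, Function.comp_def]

/-- Lengthening an EAQEC code: an `[[n,k,d;c]]` EAQEC code yields an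
`[[n+1,k,d;c+1]]` EAQEC code. -/
theorem EAQEC_lengthening (n k c d : ℕ) (hn : 1 ≤ n)
    (S : Submodule (ZMod 2) (V n))
    (hdim : Module.finrank (ZMod 2) S + k = n + c)
    (hrad : Module.finrank (ZMod 2) (S ⊓ sdual S : Submodule (ZMod 2) (V n)) + k + c = n)
    (hdist : ∀ v ∈ sdual S, v ∉ (S ⊓ sdual S : Submodule (ZMod 2) (V n)) → d ≤ wt v) :
    ∃ S' : Submodule (ZMod 2) (V (n + 1)),
      Module.finrank (ZMod 2) S' + k = (n + 1) + (c + 1) ∧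
      Module.finrank (ZMod 2) (S' ⊓ sdual S' : Submodule (ZMod 2) (V (n + 1))) + k + (c + 1)
        = n + 1 ∧
      ∀ v ∈ sdual S', v ∉ (S' ⊓ sdual S' : Submodule (ZMod 2) (V (n + 1))) → d ≤ wt v := by
  refine ⟨S.comap (dropMap n), ?_, ?_, ?_⟩
  · rw [(comapDropEquiv S).finrank_eq, Module.finrank_prod, Module.finrank_prod,
      Module.finrank_self]
    omega
  · rw [rad_comap, ← (Submodule.equivMapOfInjective (padMap n) (padMap_injective n) (S ⊓ sdual S)).finrank_eq]
    omega
  · intro v hv hv'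
    rw [rad_comap] at hv'
    rw [sdual_comap] at hv
    obtain ⟨u, hu, rfl⟩ := hv
    rw [wt_padMap]
    exact hdist u hu fun h => hv' ⟨u, h, rfl⟩
end

section
/- (Plotkin bound, additive-code form.) Let n ≥ 1 and let G be a subgroup of the additive group V_n = (ZMod 2)^n × (ZMod 2)^n with M = |G| ≥ 2, and let d ≥ 0 be an integer such that every nonzero element of G has Pauli weight at least d. Then 4·(M−1)·d ≤ 3·n·M. -/
open Finset

open scoped Classical

lemma plotkin_coord {n : ℕ} (G : AddSubgroup (V n)) (i : Fin n) :
    4 * (Finset.univ.filter fun g : G => ¬((g : V n).1 i = 0 ∧ (g : V n).2 i = 0)).card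
      ≤ 3 * Nat.card G := by
  let φ : G →+ ZMod 2 × ZMod 2 :=
    { toFun := fun g => ((g : V n).1 i, (g : V n).2 i)
      map_zero' := by simp
      map_add' := fun a b => by simp }
  have h1 : Nat.card φ.ker * Nat.card φ.range = Nat.card G := by
    rw [← AddSubgroup.index_ker]; exact AddSubgroup.card_mul_index _
  have h2 : Nat.card φ.range ≤ 4 := by
    have := Nat.card_le_card_of_injective (Subtype.val : φ.range → ZMod 2 × ZMod 2)
      Subtype.val_injective
    simpa using this
  have h3 : Nat.card φ.ker =
      (Finset.univ.filter fun g : G => ((g : V n).1 i = 0 ∧ (g : V n).2 i = 0)).card := by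
    rw [← Fintype.card_subtype, ← Nat.card_eq_fintype_card]
    refine Nat.card_congr (Equiv.subtypeEquivRight fun g => ?_)
    rw [AddMonoidHom.mem_ker]
    exact Prod.ext_iff
  have h4 := Finset.card_filter_add_card_filter_not (s := (Finset.univ : Finset G))
    (fun g : G => ((g : V n).1 i = 0 ∧ (g : V n).2 i = 0))
  rw [Finset.card_univ, ← Nat.card_eq_fintype_card] at h4
  rw [← h3] at h4
  have h5 := Nat.mul_le_mul_left (Nat.card φ.ker) h2
  omega

/-- Plotkin bound, additive-code form: if every nonzero element of a
subgroup `G ≤ V n` of order `M ≥ 2` has Pauli weight at least `d`, then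
`4(M−1)d ≤ 3nM`. -/
theorem plotkin_bound_additive (n : ℕ) (hn : 1 ≤ n) (G : AddSubgroup (V n))
    (hM : 2 ≤ Nat.card G) (d : ℕ)
    (hd : ∀ g ∈ G, g ≠ 0 → d ≤ wt g) :
    4 * (Nat.card G - 1) * d ≤ 3 * n * Nat.card G := by
  have h1 : ∑ g : G, wt (g : V n) = ∑ i : Fin n,
      (Finset.univ.filter fun g : G => ¬((g : V n).1 i = 0 ∧ (g : V n).2 i = 0)).card := by
    simp only [wt, Finset.card_filter]
    exact Finset.sum_comm
  have h2 : 4 * ∑ g : G, wt (g : V n) ≤ 3 * n * Nat.card G := by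
    rw [h1, Finset.mul_sum]
    refine (Finset.sum_le_sum fun i _ => plotkin_coord G i).trans ?_
    simp only [Finset.sum_const, Finset.card_univ, Fintype.card_fin, smul_eq_mul]
    exact le_of_eq (by ring)
  have h3 : (Nat.card G - 1) * d ≤ ∑ g : G, wt (g : V n) := by
    calc (Nat.card G - 1) * d = ∑ g ∈ (Finset.univ : Finset G).erase 0, d := by
          rw [Finset.sum_const, Finset.card_erase_of_mem (Finset.mem_univ _), Finset.card_univ,
            Nat.card_eq_fintype_card, smul_eq_mul]
      _ ≤ ∑ g ∈ (Finset.univ : Finset G).erase 0, wt (g : V n) := by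
          refine Finset.sum_le_sum fun g hg => hd g g.2 fun h => ?_
          exact (Finset.mem_erase.1 hg).1 (Subtype.ext h)
      _ ≤ _ := Finset.sum_le_sum_of_subset (Finset.erase_subset _ _)
  calc _ = 4 * ((Nat.card G - 1) * d) := by ring
    _ ≤ _ := (Nat.mul_le_mul_left 4 h3).trans h2
end

section
/- (Weight-enumerator bound on the MAP block error probability.) Let n ≥ 1, 0 ≤ k ≤ n, p ∈ [0,1], and let P(v) = (1−p)^{n−wt(v)}(p/3)^{wt(v)} and γ = 2√(p(1−p)/3) + 2p/3. Let S ⊆ V_n be an F₂-subspace with dim S = 2(n−k) and S ∩ S^⊥ = {0}, and set L = S^⊥, so that V_n = L ⊕ S and every E ∈ V_n decomposes uniquely as E = ℓ_E + s_E with ℓ_E ∈ L, s_E ∈ S. Let ℓ̂ : S → L be any map satisfying the maximum a posteriori property: for all s ∈ S and all ℓ ∈ L, P(ℓ̂(s) + s) ≥ P(ℓ + s). Then the block error probability satisfies Σ_{E ∈ V_n with ℓ̂(s_E) ≠ ℓ_E} P(E) ≤ Σ_{e ∈ L, e ≠ 0} γ^{wt(e)}; the right-hand side equals B(γ) − 1,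 where B is the weight enumerator of the logical group L. -/
open Finset

open scoped Classical

/-- The depolarizing error distribution with parameter `p` on `V n`. -/
noncomputable def depolP (n : ℕ) (p : ℝ) (v : V n) : ℝ :=
  (1 - p) ^ (n - wt v) * (p / 3) ^ (wt v)

/-- Single-qubit amplitude: square root of the single-qubit depolarizing probability. -/
noncomputable def ramp (p : ℝ) (a : ZMod 2 × ZMod 2) : ℝ :=
  if a = 0 then Real.sqrt (1 - p) else Real.sqrt (p / 3)

lemma ramp_nonneg (p : ℝ) (a : ZMod 2 × ZMod 2) : 0 ≤ ramp p a := by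
  unfold ramp; split_ifs <;> exact Real.sqrt_nonneg _

lemma prod_wt {n : ℕ} (a b : ℝ) (v : V n) :
    ∏ i, (if ((v.1 i, v.2 i) : ZMod 2 × ZMod 2) = 0 then a else b) =
      a ^ (n - wt v) * b ^ (wt v) := by
  have h1 : (Finset.univ.filter fun i => ((v.1 i, v.2 i) : ZMod 2 × ZMod 2) = 0).card
      + wt v = n := by
    have := Finset.card_filter_add_card_filter_not (s := (Finset.univ : Finset (Fin n)))
      (fun i => ((v.1 i, v.2 i) : ZMod 2 × ZMod 2) = 0)
    simp only [Finset.card_univ, Fintype.card_fin] at this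
    convert this using 2
    unfold wt
    congr 1
    ext i
    simp [Prod.ext_iff]
  have h2 : (Finset.univ.filter fun i => ¬ ((v.1 i, v.2 i) : ZMod 2 × ZMod 2) = 0).card
      = wt v := by
    unfold wt
    congr 1
    ext i
    simp [Prod.ext_iff]
  rw [Finset.prod_ite, Finset.prod_const, Finset.prod_const, h2]
  congr 2
  omega

/-- The amplitude of an `n`-qubit error. -/
noncomputable def amp {n : ℕ} (p : ℝ) (v : V n) : ℝ := ∏ i, ramp p (v.1 i, v.2 i)

lemma amp_nonneg {n : ℕ} (p : ℝ) (v : V n) : 0 ≤ amp p v :=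
  Finset.prod_nonneg fun _ _ => ramp_nonneg _ _

lemma depolP_eq {n : ℕ} (p : ℝ) (hp0 : 0 ≤ p) (hp1 : p ≤ 1) (v : V n) :
    depolP n p v = amp p v * amp p v := by
  unfold depolP amp
  rw [← prod_wt, ← Finset.prod_mul_distrib]
  refine Finset.prod_congr rfl fun i _ => ?_
  unfold ramp
  split_ifs
  · rw [Real.mul_self_sqrt (by linarith)]
  · rw [Real.mul_self_sqrt (by positivity)]

lemma single_sum (p : ℝ) (hp0 : 0 ≤ p) (hp1 : p ≤ 1) (c : ZMod 2 × ZMod 2) :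
    ∑ a, ramp p a * ramp p (a + c) =
      if c = 0 then 1 else 2 * Real.sqrt (p * (1 - p) / 3) + 2 * p / 3 := by
  have e0 : Real.sqrt (1 - p) * Real.sqrt (1 - p) = 1 - p := Real.mul_self_sqrt (by linarith)
  have e1 : Real.sqrt (p / 3) * Real.sqrt (p / 3) = p / 3 := Real.mul_self_sqrt (by positivity)
  have e2 : Real.sqrt (p * (1 - p) / 3) = Real.sqrt (1 - p) * Real.sqrt (p / 3) := by
    rw [← Real.sqrt_mul (by linarith)]; congr 1; ring
  have h00 : ramp p (0, 0) = Real.sqrt (1 - p) := by simp [ramp]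
  have h01 : ramp p (0, 1) = Real.sqrt (p / 3) := by simp [ramp]
  have h10 : ramp p (1, 0) = Real.sqrt (p / 3) := by simp [ramp]
  have h11 : ramp p (1, 1) = Real.sqrt (p / 3) := by simp [ramp]
  have h2 : (1 : ZMod 2) + 1 = 0 := by decide
  have hs : ∀ f : ZMod 2 → ℝ, ∑ a, f a = f 0 + f 1 := fun f => Fin.sum_univ_two f
  rw [Fintype.sum_prod_type, hs, hs, hs, e2]
  have hz : ∀ x : ZMod 2, x = 0 ∨ x = 1 := by decide
  obtain ⟨x, y⟩ := c
  rcases hz x with rfl | rfl <;> rcases hz y with rfl | rfl <;>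
    simp only [Prod.mk_add_mk, add_zero, zero_add, h2, h00, h01, h10, h11, Prod.mk_eq_zero,
      one_ne_zero, and_true, and_false, if_true, if_false] <;> nlinarith

lemma bhatt_sum {n : ℕ} (p : ℝ) (hp0 : 0 ≤ p) (hp1 : p ≤ 1) (e : V n) :
    ∑ E : V n, amp p E * amp p (E + e) =
      (2 * Real.sqrt (p * (1 - p) / 3) + 2 * p / 3) ^ (wt e) := by
  have h := prod_wt 1 (2 * Real.sqrt (p * (1 - p) / 3) + 2 * p / 3) e
  rw [one_pow, one_mul] at h
  rw [← h, Finset.prod_congr rfl fun i _ => (single_sum p hp0 hp1 (e.1 i, e.2 i)).symm,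
    Finset.prod_univ_sum, Fintype.piFinset_univ]
  refine (Fintype.sum_equiv (Equiv.arrowProdEquivProdArrow (Fin n) (fun _ => ZMod 2)
    (fun _ => ZMod 2)) _ _ fun x => ?_).symm
  unfold amp
  rw [← Finset.prod_mul_distrib]
  rfl

/-- Weight-enumerator bound on the MAP block error probability of a
maximal-entanglement `[[n,k;n−k]]` EAQEC code: the block error probability of any
MAP decoder is at most `B(γ) − 1 = ∑_{0 ≠ e ∈ L} γ^{wt e}`. -/
theorem MAP_block_error_weight_enumerator_bound (n k : ℕ) (hn : 1 ≤ n) (hk : k ≤ n)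
    (p : ℝ) (hp0 : 0 ≤ p) (hp1 : p ≤ 1)
    (S : Submodule (ZMod 2) (V n))
    (hdim : Module.finrank (ZMod 2) S = 2 * (n - k))
    (hrad : S ⊓ sdual S = ⊥)
    (ℓpart spart : V n → V n)
    (hdec : ∀ E : V n, ℓpart E ∈ sdual S ∧ spart E ∈ S ∧ E = ℓpart E + spart E)
    (ℓhat : V n → V n)
    (hMAP : ∀ s' ∈ S, ℓhat s' ∈ sdual S ∧
      ∀ ℓ' ∈ sdual S, depolP n p (ℓ' + s') ≤ depolP n p (ℓhat s' + s')) :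
    ∑ E ∈ Finset.univ.filter (fun E => ℓhat (spart E) ≠ ℓpart E), depolP n p E ≤
      ∑ e ∈ Finset.univ.filter (fun e => e ∈ sdual S ∧ e ≠ 0),
        (2 * Real.sqrt (p * (1 - p) / 3) + 2 * p / 3) ^ (wt e) := by
  simp_rw [← bhatt_sum p hp0 hp1]
  rw [Finset.sum_comm]
  refine (Finset.sum_le_sum (g := fun E => ∑ e ∈ Finset.univ.filter
    (fun e => e ∈ sdual S ∧ e ≠ 0), amp p E * amp p (E + e)) fun E hE => ?_).trans ?_
  · obtain ⟨hl, hs, hE'⟩ := hdec E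
    obtain ⟨hm, hmax⟩ := hMAP _ hs
    have hne := (Finset.mem_filter.1 hE).2
    have hle := hmax _ hl
    have heq : ℓhat (spart E) + spart E = E + (ℓhat (spart E) - ℓpart E) := by
      nth_rewrite 3 [hE']; abel
    rw [← hE', heq, depolP_eq p hp0 hp1, depolP_eq p hp0 hp1] at hle
    have hle' := (mul_self_le_mul_self_iff (amp_nonneg p _) (amp_nonneg p _)).2 hle
    rw [depolP_eq p hp0 hp1]
    refine (mul_le_mul_of_nonneg_left hle' (amp_nonneg p E)).trans ?_
    exact Finset.single_le_sum (f := fun e => amp p E * amp p (E + e))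
      (fun e _ => mul_nonneg (amp_nonneg p _) (amp_nonneg p _))
      (Finset.mem_filter.2 ⟨Finset.mem_univ _, Submodule.sub_mem _ hm hl, sub_ne_zero.2 hne⟩)
  · exact Finset.sum_le_sum_of_subset_of_nonneg (Finset.filter_subset _ _) fun E _ _ =>
      Finset.sum_nonneg fun e _ => mul_nonneg (amp_nonneg p _) (amp_nonneg p _)
end
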